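/- Let h, d, m, q ∈ ℕ with m ≥ 2 and q < h, and let G := G_{h,d,m}. For a vertex x at level q of the binary tree B(G) that is not the leftmost vertex of its level, let ℓ(x) be the unique leaf of B(G) that is joined by spines to S(Δ(x)) (namely the leaf immediately to the left of the leftmost leaf of B(G) below x), and set S(x) := S(Δ(x)) ∪ {ℓ(x)}. Then for any (not necessarily distinct) vertices x, x' at level q of B(G), neither leftmost of its level, and any distinct vertices u ∈ S(x) and v ∈ S(x'), we have d_G(u,v) ≥ min(d+1, 2(h−q)). -/

import Mathlib

open SimpleGraph

namespace CGT

/-- Distance between two vertex sets, as an extended natural number. -/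
noncomputable def sDist {V : Type*} (G : SimpleGraph V) (U U' : Set V) : ℕ∞ :=
  ⨅ (u : U) (v : U'), G.edist u.1 v.1

/-- The ball of radius `r` around a vertex set `U`. -/
def gBall {V : Type*} (G : SimpleGraph V) (U : Set V) (r : ℕ) : Set V :=
  {v | ∃ u ∈ U, G.edist u v ≤ (r : ℕ∞)}

/-- A set of vertices is connected if the induced subgraph is connected. -/
def SetConn {V : Type*} (G : SimpleGraph V) (U : Set V) : Prop :=
  (G.induce U).Connected

/-- The vertex set of a walk. -/
def walkSupp {V : Type*} {G : SimpleGraph V} {a b : V} (p : G.Walk a b) : Set V :=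
  {v | v ∈ p.support}

/-- `X` separates `Y` and `Z` in `G`: every path with one end in `Y` and one in `Z`
contains a vertex of `X`. -/
def Separates {V : Type*} (G : SimpleGraph V) (X Y Z : Set V) : Prop :=
  ∀ ⦃y z : V⦄, y ∈ Y → z ∈ Z → ∀ p : G.Walk y z, p.IsPath → ∃ x ∈ X, x ∈ p.support

/-- `f` is an `(M,A)`-quasi-isometry from `G` to `H`.  The two-sided distance bound
`M⁻¹ d_G(u,v) - A ≤ d_H(f u, f v) ≤ M d_G(u,v) + A` is stated multiplied out over `ℕ∞`. -/
structure IsQI {V V' : Type*} (M A : ℕ) (G : SimpleGraph V) (H : SimpleGraph V')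
    (f : V → V') : Prop where
  upper : ∀ u v : V, H.edist (f u) (f v) ≤ (M : ℕ∞) * G.edist u v + (A : ℕ∞)
  lower : ∀ u v : V, G.edist u v ≤ (M : ℕ∞) * H.edist (f u) (f v) + (M : ℕ∞) * (A : ℕ∞)
  dense : ∀ w : V', ∃ v : V, H.edist w (f v) ≤ (A : ℕ∞)

/-- `G` is `(M,A)`-quasi-isometric to `H`. -/
def QIsometric {V V' : Type*} (M A : ℕ) (G : SimpleGraph V) (H : SimpleGraph V') : Prop :=
  ∃ f : V → V', IsQI M A G H f

/-- `X` is a minor of `G`. -/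
def HasMinor {V W : Type*} (G : SimpleGraph V) (X : SimpleGraph W) : Prop :=
  ∃ U : W → Set V,
    (∀ x, (U x).Nonempty) ∧ (∀ x, SetConn G (U x)) ∧
    (∀ ⦃x y⦄, x ≠ y → Disjoint (U x) (U y)) ∧
    ∀ ⦃x y⦄, X.Adj x y → ∃ u ∈ U x, ∃ v ∈ U y, G.Adj u v

/-- The `(a × b)`-grid graph. -/
def gridGraph (a b : ℕ) : SimpleGraph (Fin a × Fin b) :=
  SimpleGraph.fromRel (fun u v =>
    (u.1 = v.1 ∧ u.2.1 + 1 = v.2.1) ∨ (u.2 = v.2 ∧ u.1.1 + 1 = v.1.1))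

/-- A `K`-fat model of `X` in `G`: disjoint connected branch sets joined by internally
disjoint branch paths, all pairwise at distance at least `K` except for a branch path and
the branch sets of its endpoints. -/
structure FatModel {V W : Type*} (G : SimpleGraph V) (X : SimpleGraph W) (K : ℕ) where
  branch : W → Set V
  branch_nonempty : ∀ x, (branch x).Nonempty
  branch_connected : ∀ x, SetConn G (branch x)
  branch_disjoint : ∀ ⦃x y⦄, x ≠ y → Disjoint (branch x) (branch y)
  pathEnd : ∀ ⦃x y⦄, X.Adj x y → V
  path : ∀ ⦃x y⦄ (e : X.Adj x y), G.Walk (pathEnd e) (pathEnd e.symm)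
  path_isPath : ∀ ⦃x y⦄ (e : X.Adj x y), (path e).IsPath
  path_symm : ∀ ⦃x y⦄ (e : X.Adj x y), path e.symm = (path e).reverse
  pathEnd_mem : ∀ ⦃x y⦄ (e : X.Adj x y), pathEnd e ∈ branch x
  path_meets : ∀ ⦃x y⦄ (e : X.Adj x y) (z : W) (v : V), v ∈ (path e).support → v ∈ branch z →
    (z = x ∧ v = pathEnd e) ∨ (z = y ∧ v = pathEnd e.symm)
  path_int_disjoint : ∀ ⦃x y x' y'⦄ (e : X.Adj x y) (e' : X.Adj x' y'), s(x, y) ≠ s(x', y') →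
    ∀ v, v ∈ (path e).support → v ∈ (path e').support → v = pathEnd e' ∨ v = pathEnd e'.symm
  fat_branch : ∀ ⦃x y⦄, x ≠ y → (K : ℕ∞) ≤ sDist G (branch x) (branch y)
  fat_path_branch : ∀ ⦃x y⦄ (e : X.Adj x y) (z : W), z ≠ x → z ≠ y →
    (K : ℕ∞) ≤ sDist G (walkSupp (path e)) (branch z)
  fat_paths : ∀ ⦃x y x' y'⦄ (e : X.Adj x y) (e' : X.Adj x' y'), s(x, y) ≠ s(x', y') →
    (K : ℕ∞) ≤ sDist G (walkSupp (path e)) (walkSupp (path e'))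

/-- `X` is a `K`-fat minor of `G`. -/
def IsFatMinor {V W : Type*} (G : SimpleGraph V) (X : SimpleGraph W) (K : ℕ) : Prop :=
  Nonempty (FatModel G X K)

/-- `W` is a `K`-fat `n`-path-connected set in `G`. -/
def FatPathConn {V : Type*} (G : SimpleGraph V) (K n : ℕ) (W : Set V) : Prop :=
  (∃ S : Finset V, ↑S ⊆ W ∧ 2 * n ≤ S.card) ∧
  (∀ ⦃u v : V⦄, u ∈ W → v ∈ W → u ≠ v → (K : ℕ∞) ≤ G.edist u v) ∧
  ∀ l : ℕ, l ≤ n → ∀ A B : Finset V, ↑A ⊆ W → ↑B ⊆ W → A.card = l → B.card = l →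
    ∃ (a b : Fin l → V) (P : ∀ i : Fin l, G.Walk (a i) (b i)),
      (∀ i, (P i).IsPath) ∧ (∀ i, a i ∈ A ∧ b i ∈ B) ∧
      ∀ i j, i ≠ j → (K : ℕ∞) ≤ sDist G (walkSupp (P i)) (walkSupp (P j))

end CGT

namespace Ghdm

/-- Raw vertex codes for the graphs `G_{h,d,m}`:
`path k` is the `k`-th vertex of the base path; `tree j i p` is the vertex at position `p`
of the `i`-th binary tree at level `j` (the root being position `[]`); and
`spine j i k t e s` is the `s`-th internal vertex of the spine from the `k`-th leaf of that
tree to the `e`-th element of the `t`-th local gluing set at level `j-1`. -/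
inductive Raw : Type where
  | path (k : ℕ)
  | tree (j i : ℕ) (p : List Bool)
  | spine (j i k t e s : ℕ)
deriving DecidableEq

/-- `N = 2^{h+1} - 1`, the number of copies of `G_{h,d,m-1}` glued inside `G_{h,d,m}`. -/
def NN (h : ℕ) : ℕ := 2 ^ (h + 1) - 1

/-- Canonical representative of a raw vertex code: all tree roots are identified with the
single root `tree m 1 []`, and the leftmost leaf of tree `i > 1` is identified with the
rightmost leaf of tree `i - 1` (consecutive copies are glued along these leaves). -/
def canon (h m : ℕ) : Raw → Raw
  | .tree j i p =>
    if p = [] then .tree m 1 []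
    else if p = List.replicate h false ∧ 1 < i then .tree j (i - 1) (List.replicate h true)
    else .tree j i p
  | x => x

/-- The `q`-bit binary representation of `i` (most significant bit first);
`false` means "left". -/
def natToBits (q i : ℕ) : List Bool := (List.range q).map fun a => Nat.testBit i (q - 1 - a)

/-- Position of the `k`-th leaf (1-based, from the left) in a binary tree of height `h`. -/
def leafPos (h k : ℕ) : List Bool := natToBits h (k - 1)

/-- The `e`-th element of the `g`-th gluing set `V^{jv}_g` (at level `jv`):
its element `e = 1` is an anchor of the base path, and its element `e ≥ 2` is a shared
extreme leaf of the trees at level `e`. -/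
def VsetElem (h d jv g e : ℕ) : Raw :=
  if e = 1 then .path ((g - 1) * NN h ^ (jv - 1) * (d + 1))
  else if (g - 1) * NN h ^ (jv - e) = 0 then .tree e 1 (List.replicate h false)
  else .tree e ((g - 1) * NN h ^ (jv - e)) (List.replicate h true)

/-- Valid (canonical) vertex codes of `G_{h,d,m}`. -/
def Valid (h d m : ℕ) : Raw → Prop
  | .path k => k ≤ (d + 1) * NN h ^ (m - 1)
  | .tree j i p => 2 ≤ j ∧ j ≤ m ∧ 1 ≤ i ∧ i ≤ NN h ^ (m - j) ∧ p.length ≤ h ∧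
      (p = [] → j = m ∧ i = 1) ∧ (p = List.replicate h false → p ≠ [] → i = 1)
  | .spine j i k t e s => 2 ≤ j ∧ j ≤ m ∧ 1 ≤ i ∧ i ≤ NN h ^ (m - j) ∧
      1 ≤ k ∧ k ≤ 2 ^ h ∧ (t = 2 * k - 2 ∨ t = 2 * k + 1) ∧ 1 ≤ t ∧ t ≤ 2 ^ (h + 1) ∧
      1 ≤ e ∧ e ≤ j - 1 ∧ 1 ≤ s ∧ s ≤ d

/-- Generating adjacencies between raw vertex codes: consecutive base path vertices,
parent/child in the binary trees, consecutive spine vertices, a spine and the leaf it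
starts at, a spine and the gluing-set vertex it ends at (the latter collapsed to a single
edge when `d = 0`). -/
inductive rawAdj (h d : ℕ) : Raw → Raw → Prop
  | base (k : ℕ) : rawAdj h d (.path k) (.path (k + 1))
  | child (j i : ℕ) (p : List Bool) (b : Bool) : p.length < h →
      rawAdj h d (.tree j i p) (.tree j i (p ++ [b]))
  | step (j i k t e s : ℕ) : rawAdj h d (.spine j i k t e s) (.spine j i k t e (s + 1))
  | toLeaf (j i k t e : ℕ) : rawAdj h d (.tree j i (leafPos h k)) (.spine j i k t e 1)
  | toV (j i k t e : ℕ) :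
      rawAdj h d (.spine j i k t e d) (VsetElem h d (j - 1) ((i - 1) * NN h + t) e)
  | short (j i k t e : ℕ) : d = 0 → 1 ≤ k → k ≤ 2 ^ h → (t = 2 * k - 2 ∨ t = 2 * k + 1) →
      1 ≤ t → t ≤ 2 ^ (h + 1) → 1 ≤ e → e ≤ j - 1 →
      rawAdj h d (.tree j i (leafPos h k)) (VsetElem h d (j - 1) ((i - 1) * NN h + t) e)

/-- Adjacency of canonical representatives. -/
def rel (h d m : ℕ) (x y : Raw) : Prop :=
  ∃ a b, rawAdj h d a b ∧ x = canon h m a ∧ y = canon h m b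

/-- The vertex set of `G_{h,d,m}`. -/
def Verts (h d m : ℕ) : Set Raw := {x | Valid h d m x}

/-- The graph `G_{h,d,m}`. -/
def G (h d m : ℕ) : SimpleGraph (Verts h d m) :=
  (SimpleGraph.fromRel (rel h d m)).induce (Verts h d m)

/-- Lift a set of raw codes to a set of vertices of `G_{h,d,m}`. -/
def lift {h d m : ℕ} (S : Set Raw) : Set (Verts h d m) := Subtype.val ⁻¹' S

/-- The root `R(G_{h,d,m})`. -/
def RootR (m : ℕ) : Raw := .tree m 1 []

/-- The gluing set `V^{jv}_g` of `G_{h,d,m}`, as a set of raw codes. -/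
def VsetRaw (h d m jv g : ℕ) : Set Raw :=
  {x | ∃ e, 1 ≤ e ∧ e ≤ jv ∧ x = canon h m (VsetElem h d jv g e)}

/-- The set `S(G_{h,d,m})`. -/
def SsetR (h d m : ℕ) : Set Raw :=
  VsetRaw h d m (m - 1) 1 ∪ {canon h m (.tree m 1 (leafPos h 1))}

/-- The set `T(G_{h,d,m})`. -/
def TsetR (h d m : ℕ) : Set Raw :=
  VsetRaw h d m (m - 1) (2 ^ (h + 1)) ∪ {canon h m (.tree m 1 (leafPos h (2 ^ h)))}

/-- For a vertex of the top binary tree at position `p`, the (1-based) index of the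
leftmost leaf of the top tree below it. -/
def kOf (h : ℕ) (p : List Bool) : ℕ :=
  (p.foldl (fun a b => 2 * a + if b then 1 else 0) 0) * 2 ^ (h - p.length) + 1

/-- `S(Δ(x))` for the vertex `x` of the top binary tree `B(G_{h,d,m})` at position `p`. -/
def SDeltaR (h d m : ℕ) (p : List Bool) : Set Raw :=
  VsetRaw h d m (m - 1) (2 * kOf h p - 1) ∪ {canon h m (.tree m 1 (leafPos h (kOf h p)))}

/-- The leaf of `B(G_{h,d,m})` immediately to the left of the leftmost leaf below the
top-tree vertex at position `p`; it is the unique leaf joined by spines to `S(Δ(x))`. -/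
def leafLeftR (h m : ℕ) (p : List Bool) : Raw :=
  canon h m (.tree m 1 (leafPos h (kOf h p - 1)))

end Ghdm

/-!
The lower bounds come from integer potentials that change by at most one along every edge.
Every spine has length `d + 1`, so such a potential need only be given on the core, that is, on
the base path and the binary trees: once truncated at `d + 1` it interpolates along the spines.

The vertices of `S(x)` are anchors of the base path and extreme leaves of subtrees rooted at
level `q` of some binary tree. For an anchor, take the distance along the base path. For an
extreme leaf `u`, let `C` be the branch at level `q + 1` that contains it; the potential is the
height on `C` and `2 (h - q)` minus the height off `C`. These agree up to one across the edge above
`C`, and `u` is the only extreme leaf in `C`, so all others have potential `2 (h - q)`.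
-/

namespace Ghdm

/-! ### Lipschitz potentials -/

/-- `f` changes by at most one between any two `r`-related elements; this is how potentials are
required to behave along the edges of a graph, or along the relation generating it. -/
def LipschitzAlong {α : Type*} (r : α → α → Prop) (f : α → ℕ) : Prop :=
  ∀ ⦃x y⦄, r x y → f x ≤ f y + 1 ∧ f y ≤ f x + 1

theorem LipschitzAlong.le_add_length {V : Type*} {G : SimpleGraph V} {f : V → ℕ}
    (hf : LipschitzAlong G.Adj f) {u v : V} (w : G.Walk u v) : f v ≤ f u + w.length := by
  induction w with
  | nil => simp
  | cons huw w ih =>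
    have := (hf huw).2
    rw [SimpleGraph.Walk.length_cons]
    omega

theorem LipschitzAlong.le_add_edist {V : Type*} {G : SimpleGraph V} {f : V → ℕ}
    (hf : LipschitzAlong G.Adj f) (u v : V) : (f v : ℕ∞) ≤ f u + G.edist u v := by
  by_cases huv : G.Reachable u v
  · obtain ⟨w, hw⟩ := huv.exists_walk_length_eq_edist
    rw [← hw]
    exact_mod_cast hf.le_add_length w
  · simp [SimpleGraph.edist_eq_top_of_not_reachable huv]

/-! ### Extending a potential along the spines -/

/-- The adjacencies of the core of `G_{h,d,m}`, i.e. of the base path and of the binary trees,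
before identification of vertex codes. -/
inductive CoreAdj (h : ℕ) : Raw → Raw → Prop
  | base (k : ℕ) : CoreAdj h (.path k) (.path (k + 1))
  | child (j i : ℕ) (p : List Bool) (b : Bool) : p.length < h →
      CoreAdj h (.tree j i p) (.tree j i (p ++ [b]))

/-- The potential `φ` truncated at `d + 1` on the core and continued to each spine with slope at
most one from both of its ends. The values of `φ` on spine codes are ignored. -/
def spineExtend (h d : ℕ) (φ : Raw → ℕ) : Raw → ℕ
  | .spine j i k t e s => min (d + 1) (min (φ (.tree j i (leafPos h k)) + s)
      (φ (VsetElem h d (j - 1) ((i - 1) * NN h + t) e) + (d + 1 - s)))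
  | x => min (d + 1) (φ x)

theorem exists_canon_tree (h m j i : ℕ) (p : List Bool) :
    ∃ j' i' p', canon h m (.tree j i p) = .tree j' i' p' ∧ p'.length = p.length := by
  unfold canon
  dsimp only
  split_ifs with hp hglued
  · exact ⟨_, _, _, rfl, by rw [hp]⟩
  · exact ⟨_, _, _, rfl, by simp [hglued.1]⟩
  · exact ⟨_, _, _, rfl, rfl⟩

section SpineExtend

variable {h d m : ℕ} {φ : Raw → ℕ}

theorem spineExtend_VsetElem (jv g e : ℕ) :
    spineExtend h d φ (VsetElem h d jv g e) = min (d + 1) (φ (VsetElem h d jv g e)) := by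
  unfold VsetElem
  split_ifs <;> rfl

theorem spineExtend_canon (hcanon : ∀ x, φ (canon h m x) = φ x) (x : Raw) :
    spineExtend h d φ (canon h m x) = spineExtend h d φ x := by
  cases x with
  | path k => rfl
  | spine j i k t e s => rfl
  | tree j i p =>
    have hφ := hcanon (.tree j i p)
    obtain ⟨j', i', p', hp', -⟩ := exists_canon_tree h m j i p
    rw [hp'] at hφ ⊢
    simp only [spineExtend, hφ]

theorem LipschitzAlong.spineExtend_rawAdj (hφ : LipschitzAlong (CoreAdj h) φ) :
    LipschitzAlong (rawAdj h d) (spineExtend h d φ) := by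
  intro x y hxy
  cases hxy with
  | base k =>
    have := hφ (.base k)
    simp only [spineExtend]
    omega
  | child j i p b hp =>
    have := hφ (.child j i p b hp)
    simp only [spineExtend]
    omega
  | step | toLeaf =>
    simp only [spineExtend]
    omega
  | toV | short =>
    rw [spineExtend_VsetElem]
    simp only [spineExtend]
    omega

theorem LipschitzAlong.spineExtend_adj (hφ : LipschitzAlong (CoreAdj h) φ)
    (hcanon : ∀ x, φ (canon h m x) = φ x) :
    LipschitzAlong (G h d m).Adj fun x => spineExtend h d φ x.1 := by
  have hrel : LipschitzAlong (rel h d m) (spineExtend h d φ) := by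
    rintro _ _ ⟨a, b, hab, rfl, rfl⟩
    rw [spineExtend_canon hcanon, spineExtend_canon hcanon]
    exact hφ.spineExtend_rawAdj hab
  intro x y hxy
  obtain ⟨-, hxy | hyx⟩ : x.1 ≠ y.1 ∧ (rel h d m x.1 y.1 ∨ rel h d m y.1 x.1) := hxy
  · exact hrel hxy
  · exact (hrel hyx).symm

theorem LipschitzAlong.spineExtend_le_edist (hφ : LipschitzAlong (CoreAdj h) φ)
    (hcanon : ∀ x, φ (canon h m x) = φ x) {u : Verts h d m} (hu : spineExtend h d φ u.1 = 0)
    (v : Verts h d m) : (spineExtend h d φ v.1 : ℕ∞) ≤ (G h d m).edist u v := by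
  simpa only [hu, Nat.cast_zero, zero_add] using (hφ.spineExtend_adj hcanon).le_add_edist u v

end SpineExtend

/-! ### The potential of a base path vertex -/

/-- The distance to the vertex `c` along the base path, and `d + 1` off the base path. -/
def pathPotential (d c : ℕ) : Raw → ℕ
  | .path k => Nat.dist k c
  | _ => d + 1

theorem pathPotential_lipschitz (h d c : ℕ) :
    LipschitzAlong (CoreAdj h) (pathPotential d c) := by
  rintro _ _ (k | ⟨j, i, p, b, hp⟩) <;> simp only [pathPotential, Nat.dist] <;> omega

theorem pathPotential_canon (h d m c : ℕ) (x : Raw) :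
    pathPotential d c (canon h m x) = pathPotential d c x := by
  cases x with
  | path k => rfl
  | spine j i k t e s => rfl
  | tree j i p =>
    obtain ⟨j', i', p', hp', -⟩ := exists_canon_tree h m j i p
    simp only [hp', pathPotential]

/-! ### The potential of a branch of a binary tree -/

/-- The vertex codes of the branch consisting of all positions extending `c` in the `I`-th tree at
level `e`. If `c` runs along the right boundary of that tree then its rightmost leaf is the leftmost
leaf of the next tree, and the mirror branch of the latter is included as well. The mirror case, `c`
along the left boundary of a tree with a predecessor, is not catered for: canonical codes name a
glued leaf by the tree to its left. -/
def InBranch (e I : ℕ) (c : List Bool) : Raw → Prop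
  | .tree j i p => j = e ∧ (i = I ∧ c <+: p ∨
      i = I + 1 ∧ c = List.replicate c.length true ∧ List.replicate c.length false <+: p)
  | _ => False

open Classical in
/-- The potential of a branch `c` starting at level `q + 1`: the height on the branch, and its
reflection `2 (h - q) - height` at height `h - q` off the branch. -/
noncomputable def branchPotential (h q e I : ℕ) (c : List Bool) : Raw → ℕ
  | .tree j i p => if InBranch e I c (.tree j i p) then h - p.length
      else 2 * (h - q) - (h - p.length)
  | _ => 2 * (h - q)

section Branch

variable {h m q e I j i : ℕ} {c p : List Bool}

theorem InBranch.length_le (hp : InBranch e I c (.tree j i p)) : c.length ≤ p.length := by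
  obtain ⟨-, ⟨-, hcp⟩ | ⟨-, -, hcp⟩⟩ := hp
  · exact hcp.length_le
  · simpa only [List.length_replicate] using hcp.length_le

theorem InBranch.append (hp : InBranch e I c (.tree j i p)) (b : Bool) :
    InBranch e I c (.tree j i (p ++ [b])) := by
  have hpb : p <+: p ++ [b] := List.prefix_append p [b]
  exact ⟨hp.1, hp.2.imp (And.imp_right (·.trans hpb))
    (And.imp_right (And.imp_right (·.trans hpb)))⟩

theorem InBranch.of_append {b : Bool} (hp : InBranch e I c (.tree j i (p ++ [b]))) :
    InBranch e I c (.tree j i p) ∨ c.length = p.length + 1 := by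
  obtain ⟨hj, ⟨hi, hcp⟩ | ⟨hi, hc, hcp⟩⟩ := hp <;>
    rcases List.prefix_concat_iff.mp hcp with heq | hcp
  · exact .inr (by simp [heq])
  · exact .inl ⟨hj, .inl ⟨hi, hcp⟩⟩
  · exact .inr (by simpa using congrArg List.length heq)
  · exact .inl ⟨hj, .inr ⟨hi, hc, hcp⟩⟩

theorem branchPotential_lipschitz (e I : ℕ) (hc : c.length = q + 1) :
    LipschitzAlong (CoreAdj h) (branchPotential h q e I c) := by
  rintro _ _ (k | ⟨j, i, p, b, hp⟩)
  · simp only [branchPotential]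
    omega
  · simp only [branchPotential, List.length_append, List.length_singleton]
    split_ifs with hpar hchild hchild
    · omega
    · exact absurd (hpar.append b) hchild
    · have hlen : c.length = p.length + 1 := hchild.of_append.resolve_left hpar
      omega
    · omega

theorem inBranch_glued_leaf_iff (hc₀ : c ≠ []) (hch : c.length ≤ h)
    (hI : c = List.replicate c.length false → I ≤ 1) (hi : 1 < i) :
    InBranch e I c (.tree j (i - 1) (List.replicate h true)) ↔
      InBranch e I c (.tree j i (List.replicate h false)) := by
  have hpos : c.length ≠ 0 := List.length_eq_zero_iff.not.mpr hc₀
  have hfalse : List.replicate c.length false <+: List.replicate h false :=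
    List.prefix_replicate_iff.mpr ⟨by simpa using hch, by simp⟩
  constructor
  · rintro ⟨rfl, ⟨hi', hc⟩ | ⟨-, -, hc⟩⟩
    · exact ⟨rfl, .inr ⟨by omega, (List.prefix_replicate_iff.mp hc).2, hfalse⟩⟩
    · exact absurd hc (by simp [List.prefix_replicate_iff, List.replicate_inj, hpos])
  · rintro ⟨rfl, ⟨rfl, hc⟩ | ⟨rfl, hc, -⟩⟩
    · exact absurd (hI (List.prefix_replicate_iff.mp hc).2) (by omega)
    · exact ⟨rfl, .inl ⟨rfl, List.prefix_replicate_iff.mpr ⟨hch, hc⟩⟩⟩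

theorem inBranch_canon_iff (hc₀ : c ≠ []) (hch : c.length ≤ h)
    (hI : c = List.replicate c.length false → I ≤ 1) :
    InBranch e I c (canon h m (.tree j i p)) ↔ InBranch e I c (.tree j i p) := by
  have hroot (j i : ℕ) : ¬ InBranch e I c (.tree j i []) := fun hnil =>
    hc₀ (List.eq_nil_of_length_eq_zero (Nat.le_zero.mp hnil.length_le))
  unfold canon
  dsimp only
  split_ifs with hp hglued
  · subst hp
    simp only [hroot]
  · obtain ⟨rfl, hi⟩ := hglued
    exact inBranch_glued_leaf_iff hc₀ hch hI hi
  · rfl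

theorem branchPotential_canon (q e m : ℕ) (hc₀ : c ≠ []) (hch : c.length ≤ h)
    (hI : c = List.replicate c.length false → I ≤ 1) (x : Raw) :
    branchPotential h q e I c (canon h m x) = branchPotential h q e I c x := by
  cases x with
  | path k => rfl
  | spine j i k t e s => rfl
  | tree j i p =>
    have hmem := inBranch_canon_iff (e := e) (m := m) (j := j) (i := i) (p := p) hc₀ hch hI
    obtain ⟨j', i', p', hcanon, hlen⟩ := exists_canon_tree h m j i p
    rw [hcanon] at hmem ⊢
    rw [branchPotential, branchPotential, hlen, propext hmem]

end Branch

/-! ### Marked vertices -/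

/-- The shapes of the codes in `S(x)` for `x` at level `q`: anchors of the base path, and leaves
that are leftmost (`b = false`) or rightmost (`b = true`) below the level-`q` vertex at position `s`
of some binary tree. -/
inductive IsMarked (h d q : ℕ) : Raw → Prop
  | anchor (c : ℕ) : IsMarked h d q (.path (c * (d + 1)))
  | leaf (e I : ℕ) (s : List Bool) (b : Bool) (hs : s.length = q) :
      IsMarked h d q (.tree e I (s ++ List.replicate (h - q) b))

section ExtremeLeaves

variable {s s' : List Bool} {b b' : Bool} {r : ℕ}

theorem concat_prefix_append_replicate (s : List Bool) (b : Bool) (hr : 0 < r) :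
    s ++ [b] <+: s ++ List.replicate r b := by
  rw [List.prefix_append_right_inj, List.prefix_replicate_iff]
  exact ⟨hr, rfl⟩

theorem eq_and_eq_of_concat_prefix (hr : 0 < r) (hs : s.length = s'.length)
    (hpre : s ++ [b] <+: s' ++ List.replicate r b') : s = s' ∧ b = b' := by
  obtain ⟨n, rfl⟩ := Nat.exists_eq_add_one.mpr hr
  obtain ⟨t, ht⟩ := hpre
  rw [List.append_assoc, List.replicate_succ] at ht
  obtain ⟨hss, hbt⟩ := List.append_inj ht hs
  exact ⟨hss, (List.cons.inj hbt).1⟩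

theorem append_replicate_eq_replicate_of_prefix (hr : 0 < r)
    (hpre : List.replicate (s.length + 1) b' <+: s ++ List.replicate r b) :
    s ++ List.replicate r b = List.replicate (s.length + r) b' := by
  rw [List.replicate_succ'] at hpre
  obtain ⟨hs, rfl⟩ := eq_and_eq_of_concat_prefix hr List.length_replicate hpre
  rw [List.replicate_add, hs]

theorem index_eq_one_of_valid {h d m e I : ℕ} (hs : s.length < h)
    (hvalid : Valid h d m (.tree e I (s ++ List.replicate (h - s.length) b)))
    (hpre : List.replicate (s.length + 1) false <+: s ++ List.replicate (h - s.length) b) :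
    I = 1 := by
  obtain ⟨-, -, -, -, -, -, hleftmost⟩ := hvalid
  refine hleftmost ?_ ?_
  · rw [append_replicate_eq_replicate_of_prefix (Nat.sub_pos_of_lt hs) hpre,
      Nat.add_sub_cancel' hs.le]
  · intro hnil
    rw [hnil] at hpre
    simp at hpre

theorem not_inBranch_of_ne {h d m e I e' I' : ℕ} (hs : s.length < h)
    (hlen : s.length = s'.length) (hI : 1 ≤ I)
    (hvalid : Valid h d m (.tree e' I' (s' ++ List.replicate (h - s'.length) b')))
    (hne : Raw.tree e I (s ++ List.replicate (h - s.length) b) ≠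
      .tree e' I' (s' ++ List.replicate (h - s'.length) b')) :
    ¬ InBranch e I (s ++ [b]) (.tree e' I' (s' ++ List.replicate (h - s'.length) b')) := by
  rintro ⟨rfl, ⟨rfl, hpre⟩ | ⟨rfl, -, hpre⟩⟩
  · obtain ⟨rfl, rfl⟩ := eq_and_eq_of_concat_prefix (by omega) hlen hpre
    exact hne rfl
  · rw [List.length_append, List.length_singleton, hlen] at hpre
    have := index_eq_one_of_valid (hlen ▸ hs) hvalid hpre
    omega

end ExtremeLeaves

section MarkedDistance

variable {h d m q : ℕ} {u v : Verts h d m}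

theorem succ_le_edist_of_anchor {c : ℕ} (hu : u.1 = .path (c * (d + 1)))
    (hv : IsMarked h d q v.1) (huv : u.1 ≠ v.1) : ((d + 1 : ℕ) : ℕ∞) ≤ (G h d m).edist u v := by
  have hu₀ : spineExtend h d (pathPotential d (c * (d + 1))) u.1 = 0 := by
    simp [hu, spineExtend, pathPotential]
  refine le_trans ?_ ((pathPotential_lipschitz h d _).spineExtend_le_edist
    (pathPotential_canon h d m _) hu₀ v)
  generalize v.1 = y at hv huv
  cases hv with
  | leaf => simp [spineExtend, pathPotential]
  | anchor c' =>
    have hcc' : c' ≠ c := by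
      rintro rfl
      exact huv hu
    have hdist : d + 1 ≤ Nat.dist (c' * (d + 1)) (c * (d + 1)) := by
      rw [Nat.dist_mul_right]
      exact Nat.le_mul_of_pos_left _ (Nat.dist_pos_of_ne hcc')
    simp [spineExtend, pathPotential, hdist]

theorem min_le_edist_of_leaf {e I : ℕ} {s : List Bool} {b : Bool} (hs : s.length < h)
    (hu : u.1 = .tree e I (s ++ List.replicate (h - s.length) b))
    (hv : IsMarked h d s.length v.1) (huv : u.1 ≠ v.1) :
    ((min (d + 1) (2 * (h - s.length)) : ℕ) : ℕ∞) ≤ (G h d m).edist u v := by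
  have hr : 0 < h - s.length := Nat.sub_pos_of_lt hs
  have hvalid : Valid h d m (.tree e I (s ++ List.replicate (h - s.length) b)) := hu ▸ u.2
  have hlen : (s ++ [b]).length = s.length + 1 := List.length_append
  have hself := concat_prefix_append_replicate s b hr
  have hI : s ++ [b] = List.replicate (s ++ [b]).length false → I ≤ 1 := fun hleft =>
    (index_eq_one_of_valid hs hvalid (by rwa [hleft, hlen] at hself)).le
  have hu₀ : spineExtend h d (branchPotential h s.length e I (s ++ [b])) u.1 = 0 := by
    simp [hu, spineExtend, branchPotential, InBranch, hself, hs.le]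
  refine le_trans ?_ ((branchPotential_lipschitz e I hlen).spineExtend_le_edist
    (branchPotential_canon s.length e m (by simp) (by omega) hI) hu₀ v)
  have hv_valid : Valid h d m v.1 := v.2
  generalize v.1 = y at hv hv_valid huv
  cases hv with
  | anchor c' => simp [spineExtend, branchPotential]
  | leaf e' I' s' b' hs' =>
    rw [← hs'] at hv_valid
    have hout := not_inBranch_of_ne hs hs'.symm hvalid.2.2.1 hv_valid
      (by rw [hs', ← hu]; exact huv)
    rw [hs'] at hout
    simp [spineExtend, branchPotential, hout, hs', hs.le]

theorem min_le_edist_of_isMarked (hq : q < h) (hu : IsMarked h d q u.1)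
    (hv : IsMarked h d q v.1) (huv : u ≠ v) :
    ((min (d + 1) (2 * (h - q)) : ℕ) : ℕ∞) ≤ (G h d m).edist u v := by
  have hval : u.1 ≠ v.1 := Subtype.coe_ne_coe.mpr huv
  generalize hx : u.1 = x at hu
  cases hu with
  | anchor c =>
    exact (Nat.cast_le.mpr (min_le_left _ _)).trans (succ_le_edist_of_anchor hx hv hval)
  | leaf e I s b hs =>
    subst hs
    exact min_le_edist_of_leaf hq hx hv hval

end MarkedDistance

/-! ### The vertices of `S(x)` are marked -/

theorem natToBits_add (q r n : ℕ) :
    natToBits (q + r) n = natToBits q (n / 2 ^ r) ++ natToBits r n := by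
  simp only [natToBits, List.range_add, List.map_append, List.map_map]
  congr 1 <;> refine List.map_congr_left fun a ha => ?_
  · rw [List.mem_range] at ha
    rw [Nat.testBit_div_two_pow]
    congr 1
    omega
  · simp only [Function.comp_apply]
    congr 1
    omega

theorem natToBits_eq_replicate {r n : ℕ} {b : Bool} (hb : ∀ j < r, n.testBit j = b) :
    natToBits r n = List.replicate r b := by
  refine List.eq_replicate_iff.mpr ⟨by simp [natToBits], ?_⟩
  simp only [natToBits, List.mem_map, List.mem_range]
  rintro _ ⟨a, ha, rfl⟩
  exact hb _ (by omega)

theorem testBit_mul_two_pow_of_lt (c : ℕ) {r j : ℕ} (hj : j < r) :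
    (c * 2 ^ r).testBit j = false := by
  simp [Nat.testBit_mul_two_pow, hj]

theorem testBit_mul_two_pow_sub_one_of_lt {c r j : ℕ} (hc : c ≠ 0) (hj : j < r) :
    (c * 2 ^ r - 1).testBit j = true := by
  obtain ⟨c, rfl⟩ := Nat.exists_eq_add_one_of_ne_zero hc
  have hpos : 0 < 2 ^ r := by positivity
  have hsplit : (c + 1) * 2 ^ r - 1 = 2 ^ r * c + (2 ^ r - 1) := by
    rw [add_one_mul, mul_comm, Nat.add_sub_assoc hpos]
  rw [hsplit, Nat.testBit_two_pow_mul_add _ (by omega), if_pos hj, Nat.testBit_two_pow_sub_one]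
  simpa using hj

theorem foldl_bits_eq_zero_iff (p : List Bool) (a : ℕ) :
    p.foldl (fun a b => 2 * a + if b then 1 else 0) a = 0 ↔
      a = 0 ∧ p = List.replicate p.length false := by
  induction p generalizing a with
  | nil => simp
  | cons b p ih => cases b <;> simp [ih, List.replicate_succ]

section MarkedMembership

variable {h d q : ℕ}

theorem isMarked_replicate (d e I : ℕ) (b : Bool) (hq : q ≤ h) :
    IsMarked h d q (.tree e I (List.replicate h b)) := by
  have := IsMarked.leaf (h := h) (d := d) e I (List.replicate q b) b List.length_replicate
  rwa [← List.replicate_add, Nat.add_sub_cancel' hq] at this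

theorem IsMarked.canon (m : ℕ) (hq : q < h) {x : Raw} (hx : IsMarked h d q x) :
    IsMarked h d q (canon h m x) := by
  cases hx with
  | anchor c => exact .anchor c
  | leaf e I s b hs =>
    unfold Ghdm.canon
    dsimp only
    split_ifs with hnil hglued
    · have := congrArg List.length hnil
      simp only [List.length_append, List.length_replicate, List.length_nil] at this
      omega
    · exact isMarked_replicate d e (I - 1) true hq.le
    · exact .leaf _ _ _ _ hs

theorem isMarked_natToBits (d e I : ℕ) {n : ℕ} {b : Bool} (hq : q ≤ h)
    (hb : ∀ j < h - q, n.testBit j = b) : IsMarked h d q (.tree e I (natToBits h n)) := by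
  rw [← Nat.add_sub_cancel' hq, natToBits_add, natToBits_eq_replicate hb, Nat.add_sub_cancel' hq]
  exact .leaf _ _ _ _ (by simp [natToBits])

theorem isMarked_VsetElem (jv g e : ℕ) (hq : q ≤ h) :
    IsMarked h d q (VsetElem h d jv g e) := by
  unfold VsetElem
  split_ifs
  · exact .anchor _
  · exact isMarked_replicate _ _ _ _ hq
  · exact isMarked_replicate _ _ _ _ hq

variable {p : List Bool}

theorem isMarked_of_mem_SDeltaR {m : ℕ} (hp : p.length < h) {x : Raw}
    (hx : x ∈ SDeltaR h d m p) : IsMarked h d p.length x := by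
  rcases hx with ⟨e, -, -, rfl⟩ | rfl
  · exact (isMarked_VsetElem _ _ e hp.le).canon m hp
  · exact (isMarked_natToBits d m 1 hp.le fun j hj => testBit_mul_two_pow_of_lt _ hj).canon m hp

theorem isMarked_leafLeftR (d m : ℕ) (hp : p.length < h)
    (hleft : p ≠ List.replicate p.length false) : IsMarked h d p.length (leafLeftR h m p) := by
  have hvalue := mt (foldl_bits_eq_zero_iff p 0).mp fun hzero => hleft hzero.2
  exact (isMarked_natToBits d m 1 hp.le fun j hj =>
    testBit_mul_two_pow_sub_one_of_lt hvalue hj).canon m hp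

theorem isMarked_of_mem_SDeltaR_union_leafLeftR {m : ℕ} (hp : p.length < h)
    (hleft : p ≠ List.replicate p.length false) {x : Raw}
    (hx : x ∈ SDeltaR h d m p ∪ {leafLeftR h m p}) : IsMarked h d p.length x := by
  rcases hx with hx | rfl
  · exact isMarked_of_mem_SDeltaR hp hx
  · exact isMarked_leafLeftR d m hp hleft

end MarkedMembership

end Ghdm

/-- for vertices `x, x'` (at positions `p, p'`) at level `q < h` of
`B(G_{h,d,m})`, neither leftmost at its level, any two distinct vertices
`u ∈ S(x) = S(Δ(x)) ∪ {ℓ(x)}` and `v ∈ S(x')` satisfy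
`d_G(u,v) ≥ min(d+1, 2(h-q))`. -/
theorem statement13 (h d m q : ℕ) (hm : 2 ≤ m) (hq : q < h)
    (p p' : List Bool) (hp : p.length = q) (hp' : p'.length = q)
    (hpl : p ≠ List.replicate q false) (hpl' : p' ≠ List.replicate q false)
    (u v : Ghdm.Verts h d m)
    (hu : u.1 ∈ Ghdm.SDeltaR h d m p ∪ {Ghdm.leafLeftR h m p})
    (hv : v.1 ∈ Ghdm.SDeltaR h d m p' ∪ {Ghdm.leafLeftR h m p'})
    (huv : u ≠ v) :
    ((min (d + 1) (2 * (h - q)) : ℕ) : ℕ∞) ≤ (Ghdm.G h d m).edist u v := by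
  subst hp
  have hu_marked := Ghdm.isMarked_of_mem_SDeltaR_union_leafLeftR hq hpl hu
  have hv_marked :=
    Ghdm.isMarked_of_mem_SDeltaR_union_leafLeftR (hp'.trans_lt hq) (by rwa [hp']) hv
  rw [hp'] at hv_marked
  exact Ghdm.min_le_edist_of_isMarked hq hu_marked hv_marked huv
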